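/- Let n ∈ ℕ, p⃗, q⃗ ∈ (0,∞)^n and α⃗ ∈ ℝⁿ. Then the set C_c(ℝⁿ) ∩ Ė^{α⃗,p⃗}_{q⃗}(ℝⁿ) of compactly supported continuous functions belonging to Ė^{α⃗,p⃗}_{q⃗}(ℝⁿ) is dense in Ė^{α⃗,p⃗}_{q⃗}(ℝⁿ): for every f ∈ Ė^{α⃗,p⃗}_{q⃗}(ℝⁿ) and every ε > 0 there exists a compactly supported continuous g ∈ Ė^{α⃗,p⃗}_{q⃗}(ℝⁿ) with ‖f - g‖_{Ė^{α⃗,p⃗}_{q⃗}(ℝⁿ)} < ε. -/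

import Mathlib

open MeasureTheory ENNReal Filter

noncomputable section

/-- The dyadic annulus `R_k = (-2^k, 2^k) \ (-2^(k-1), 2^(k-1))` in `ℝ`. -/
def herzRing (k : ℤ) : Set ℝ :=
  Set.Ioo (-(2 : ℝ) ^ k) ((2 : ℝ) ^ k) \ Set.Ioo (-(2 : ℝ) ^ (k - 1)) ((2 : ℝ) ^ (k - 1))

/-- The `L^q` "norm" (valued in `ℝ≥0∞`) of an `ℝ≥0∞`-valued function on a set `s ⊆ ℝ`,
with the usual modification when `q = ∞`. -/
def lqNormOn (q : ℝ≥0∞) (s : Set ℝ) (g : ℝ → ℝ≥0∞) : ℝ≥0∞ :=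
  if q = ∞ then essSup (s.indicator g) volume
  else (∫⁻ x in s, g x ^ q.toReal) ^ (1 / q.toReal)

/-- The `l^p` norm over `ℤ` of an `ℝ≥0∞`-valued sequence, with the usual modification
when `p = ∞`. -/
def lpZNorm (p : ℝ≥0∞) (a : ℤ → ℝ≥0∞) : ℝ≥0∞ :=
  if p = ∞ then ⨆ k, a k
  else (∑' k : ℤ, a k ^ p.toReal) ^ (1 / p.toReal)

/-- The one-dimensional Herz norm `K^{α,p}_q` of an `ℝ≥0∞`-valued function on `ℝ`. -/
def herzNorm1 (α : ℝ) (p q : ℝ≥0∞) (g : ℝ → ℝ≥0∞) : ℝ≥0∞ :=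
  lpZNorm p fun k => ENNReal.ofReal ((2 : ℝ) ^ ((k : ℝ) * α)) * lqNormOn q (herzRing k) g

/-- The mixed-norm Herz norm on `ℝⁿ` of an `ℝ≥0∞`-valued function: the Herz norm
`K^{α_1,p_1}_{q_1}` is applied in the first variable, then `K^{α_2,p_2}_{q_2}` in the
second variable, …, and finally `K^{α_n,p_n}_{q_n}` in the last variable. -/
def mixedHerzNormE : (n : ℕ) → (Fin n → ℝ) → (Fin n → ℝ≥0∞) → (Fin n → ℝ≥0∞) →
    ((Fin n → ℝ) → ℝ≥0∞) → ℝ≥0∞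
  | 0, _, _, _, f => f fun i => i.elim0
  | n + 1, α, p, q, f =>
    herzNorm1 (α (Fin.last n)) (p (Fin.last n)) (q (Fin.last n)) fun xlast =>
      mixedHerzNormE n (Fin.init α) (Fin.init p) (Fin.init q) fun y => f (Fin.snoc y xlast)

/-- The mixed-norm Herz norm `‖f‖_{Ė^{α,p}_q(ℝⁿ)}` of a complex-valued function on `ℝⁿ`. -/
def herzNormC (n : ℕ) (α : Fin n → ℝ) (p q : Fin n → ℝ≥0∞) (f : (Fin n → ℝ) → ℂ) : ℝ≥0∞ :=
  mixedHerzNormE n α p q fun x => (‖f x‖₊ : ℝ≥0∞)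

/-- `I_m = (-2^m, -2^{-m}] ∪ [2^{-m}, 2^m)`. -/
def herzI (m : ℕ) : Set ℝ :=
  Set.Ioc (-(2 : ℝ) ^ (m : ℤ)) (-(2 : ℝ) ^ (-(m : ℤ))) ∪
    Set.Ico ((2 : ℝ) ^ (-(m : ℤ))) ((2 : ℝ) ^ (m : ℤ))

/-- `A_m = I_m^n ⊆ ℝⁿ`. -/
def herzA (n m : ℕ) : Set (Fin n → ℝ) := Set.univ.pi fun _ => herzI m

/-- The class `H(ℝⁿ)` of simple functions built from finitely many pairwise disjoint
parallelepipeds contained in some `A_m`. -/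
def IsHSimple (n : ℕ) (f : (Fin n → ℝ) → ℂ) : Prop :=
  ∃ (m N : ℕ) (a : Fin N → ℂ) (E : Fin N → Fin n → Set ℝ),
    (∀ k i, MeasurableSet (E k i)) ∧
    (∀ k, Set.univ.pi (E k) ⊆ herzA n m) ∧
    (Pairwise fun k l => Disjoint (Set.univ.pi (E k)) (Set.univ.pi (E l))) ∧
    f = fun x => ∑ k, (Set.univ.pi (E k)).indicator (fun _ => a k) x

/-- The Euclidean ball `B(x,r)` in `ℝⁿ`. -/
def eucBall (n : ℕ) (x : Fin n → ℝ) (r : ℝ) : Set (Fin n → ℝ) :=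
  {y | ∑ i, (y i - x i) ^ 2 < r ^ 2}

/-- The (uncentered) maximal operator in the `k`-th variable. -/
def maxVar (n : ℕ) (k : Fin n) (g : (Fin n → ℝ) → ℝ≥0∞) : (Fin n → ℝ) → ℝ≥0∞ :=
  fun x => ⨆ (a : ℝ) (b : ℝ) (_ : x k ∈ Set.Ioo a b),
    (volume (Set.Ioo a b))⁻¹ * ∫⁻ y in Set.Ioo a b, g (Function.update x k y)

/-- The centered Hardy–Littlewood maximal operator on `ℝⁿ`. -/
def centeredMax (n : ℕ) (g : (Fin n → ℝ) → ℝ≥0∞) : (Fin n → ℝ) → ℝ≥0∞ :=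
  fun x => ⨆ (r : ℝ) (_ : 0 < r),
    (volume (eucBall n x r))⁻¹ * ∫⁻ y in eucBall n x r, g y

/-- The composition `M_n ∘ ⋯ ∘ M_1` of the maximal operators in each variable. -/
def iteratedMax (n : ℕ) (g : (Fin n → ℝ) → ℝ≥0∞) : (Fin n → ℝ) → ℝ≥0∞ :=
  (List.ofFn fun k : Fin n => maxVar n k).foldl (fun h F => F h) g

/-- The iterated maximal operator `ℳ_t(f) = [M_n ⋯ M_1(|f|^t)]^{1/t}`. -/
def iterMaxPow (n : ℕ) (t : ℝ) (f : (Fin n → ℝ) → ℂ) : (Fin n → ℝ) → ℝ≥0∞ :=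
  fun x => iteratedMax n (fun y => (‖f y‖₊ : ℝ≥0∞) ^ t) x ^ (1 / t)

/-- The `l^r`-Herz type mixed norm of a sequence of functions on `ℝⁿ`. -/
def herzSeqNorm (n : ℕ) (r : ℝ≥0∞) (α : Fin n → ℝ) (p q : Fin n → ℝ≥0∞)
    (F : ℤ → (Fin n → ℝ) → ℂ) : ℝ≥0∞ :=
  mixedHerzNormE n α p q fun x => lpZNorm r fun j => (‖F j x‖₊ : ℝ≥0∞)

/-- `N` is a ball quasi-Banach function norm on (nonnegative extended-real-valued)
measurable functions on `ℝⁿ`. -/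
def IsBQBFNorm (n : ℕ) (N : ((Fin n → ℝ) → ℝ≥0∞) → ℝ≥0∞) : Prop :=
  (∀ f : (Fin n → ℝ) → ℝ≥0∞, Measurable f → N f = 0 → f =ᵐ[volume] 0) ∧
  (∀ f g : (Fin n → ℝ) → ℝ≥0∞, Measurable f → Measurable g →
    (∀ᵐ x ∂volume, g x ≤ f x) → N g ≤ N f) ∧
  (∀ (fm : ℕ → (Fin n → ℝ) → ℝ≥0∞) (f : (Fin n → ℝ) → ℝ≥0∞),
    (∀ m, Measurable (fm m)) → Measurable f →
    (∀ᵐ x ∂volume, Monotone (fun m => fm m x) ∧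
      Tendsto (fun m => fm m x) atTop (nhds (f x))) →
    Monotone (fun m => N (fm m)) ∧ Tendsto (fun m => N (fm m)) atTop (nhds (N f))) ∧
  (∀ (x : Fin n → ℝ) (r : ℝ), 0 < r →
    N ((eucBall n x r).indicator fun _ => (1 : ℝ≥0∞)) ≠ ∞)

/-- `N` is a ball Banach function norm: a ball quasi-Banach function norm that moreover
satisfies the triangle inequality and locally dominates the `L¹` norm. -/
def IsBallBanachNorm (n : ℕ) (N : ((Fin n → ℝ) → ℝ≥0∞) → ℝ≥0∞) : Prop :=
  IsBQBFNorm n N ∧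
  (∀ f g : (Fin n → ℝ) → ℝ≥0∞, Measurable f → Measurable g → N (f + g) ≤ N f + N g) ∧
  (∀ (x : Fin n → ℝ) (r : ℝ), 0 < r → ∃ C : ℝ≥0∞, 0 < C ∧ C ≠ ∞ ∧
    ∀ f : (Fin n → ℝ) → ℝ≥0∞, Measurable f → (∫⁻ y in eucBall n x r, f y) ≤ C * N f)

/-- The associate (Köthe dual) norm of a function norm `N`. -/
def assocNormOf (n : ℕ) (N : ((Fin n → ℝ) → ℝ≥0∞) → ℝ≥0∞)
    (f : (Fin n → ℝ) → ℝ≥0∞) : ℝ≥0∞ :=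
  ⨆ (g : (Fin n → ℝ) → ℝ≥0∞) (_ : Measurable g) (_ : N g = 1), ∫⁻ x, f x * g x

/-- The `θ`-convexification of a function norm: `‖f‖_{X^θ} = ‖|f|^θ‖_X^{1/θ}`
(here stated with `θ` in place of `1/p`, so `X^{1/p}` is `convexPow n (1/p) N`). -/
def convexPow (n : ℕ) (θ : ℝ) (N : ((Fin n → ℝ) → ℝ≥0∞) → ℝ≥0∞)
    (f : (Fin n → ℝ) → ℝ≥0∞) : ℝ≥0∞ :=
  N (fun x => f x ^ θ) ^ (1 / θ)

/-- The associate space norm of the mixed-norm Herz space, for complex-valued functions. -/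
def herzAssocNormC (n : ℕ) (α : Fin n → ℝ) (p q : Fin n → ℝ≥0∞)
    (f : (Fin n → ℝ) → ℂ) : ℝ≥0∞ :=
  ⨆ (g : (Fin n → ℝ) → ℂ) (_ : Measurable g) (_ : herzNormC n α p q g = 1),
    ∫⁻ x, (‖f x * g x‖₊ : ℝ≥0∞)

/-!
`K^{α,p}_q(ℝ)` is a weighted `ℓ^p` norm, over the dyadic annuli, of `L^q` norms, and the mixed norm
iterates this one variable at a time. For finite exponents, dominated convergence in `L^q` and `ℓ^p`
therefore passes to the mixed Herz norm by induction on the dimension, slice by slice, and so does a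
quasi-triangle inequality. Dominated convergence is then used twice. First, `f` is the limit of its
truncations in size and to compact boxes avoiding the coordinate hyperplanes, since these boxes
exhaust almost all of `ℝⁿ`. Second, a bounded function supported in such a box is the almost
everywhere limit of continuous functions with the same bound and supports in a slightly larger box,
whose indicator has finite norm because each of its factors meets only finitely many annuli.
-/

open Set Topology

variable {X E : Type*}

section LpNorm

variable [MeasurableSpace X] {μ : Measure X} {p : ℝ≥0∞}

theorem tendsto_eLpNorm_zero_of_dominated (hp0 : p ≠ 0) (hp : p ≠ ∞) {F : ℕ → X → ℝ≥0∞}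
    {G : X → ℝ≥0∞} (hF : ∀ j, AEMeasurable (F j) μ) (hG : AEMeasurable G μ)
    (hFG : ∀ j, F j ≤ᵐ[μ] G) (hfin : eLpNorm G p μ ≠ ∞)
    (hlim : ∀ᵐ x ∂μ, G x ≠ ∞ → Tendsto (fun j => F j x) atTop (𝓝 0)) :
    Tendsto (fun j => eLpNorm (F j) p μ) atTop (𝓝 0) := by
  have hp_pos : 0 < p.toReal := toReal_pos hp0 hp
  have hG_fin : ∫⁻ x, G x ^ p.toReal ∂μ ≠ ∞ := by
    simpa using (lintegral_rpow_enorm_lt_top_of_eLpNorm_lt_top hp0 hp hfin.lt_top).ne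
  have hint : Tendsto (fun j => ∫⁻ x, F j x ^ p.toReal ∂μ) atTop (𝓝 0) := by
    rw [← lintegral_zero (μ := μ)]
    refine tendsto_lintegral_of_dominated_convergence' _ (fun j => (hF j).pow_const _)
      (fun j => (hFG j).mono fun x hx => rpow_le_rpow hx hp_pos.le) hG_fin ?_
    filter_upwards [hlim, ae_lt_top' (hG.pow_const _) hG_fin] with x hx hGx
    have hGx' : G x ≠ ∞ := fun h => by simp [h, hp_pos] at hGx
    simpa [hp_pos] using (hx hGx').ennrpow_const p.toReal
  simpa [eLpNorm_eq_lintegral_rpow_enorm_toReal hp0 hp, hp_pos] using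
    hint.ennrpow_const (1 / p.toReal)

theorem measurable_eLpNorm_prod_right {Y : Type*} [MeasurableSpace Y] [SFinite μ] (hp : p ≠ ∞)
    {F : Y → X → ℝ≥0∞} (hF : Measurable (Function.uncurry F)) :
    Measurable fun y => eLpNorm (F y) p μ := by
  rcases eq_or_ne p 0 with rfl | hp0
  · simp
  · simp only [eLpNorm_eq_lintegral_rpow_enorm_toReal hp0 hp, enorm_eq_self]
    exact (hF.pow_const _).lintegral_prod_right'.pow_const _

theorem eLpNorm_count_ne_top_of_finite_support [MeasurableSingletonClass X] {a : X → ℝ≥0∞}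
    (ha : ∀ x, a x ≠ ∞) (hsupp : a.support.Finite) : eLpNorm a p Measure.count ≠ ∞ := by
  have hle : ∀ x, ‖a x‖ₑ ≤ ‖a.support.indicator (fun _ => ∑ y ∈ hsupp.toFinset, a y) x‖ₑ := by
    intro x
    by_cases hx : x ∈ a.support
    · simpa [hx] using Finset.single_le_sum_of_canonicallyOrdered (hsupp.mem_toFinset.2 hx)
    · simp [Function.notMem_support.1 hx]
  refine ne_top_of_le_ne_top ?_ ((eLpNorm_mono_enorm hle).trans (eLpNorm_indicator_const_le _ p))
  refine mul_ne_top (by simpa using fun x _ => ha x) (rpow_ne_top_of_nonneg (by positivity) ?_)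
  exact (Measure.count_apply_lt_top.2 hsupp).ne

end LpNorm

section HerzNorm1

variable {α : ℝ} {p q : ℝ≥0∞}

theorem lqNormOn_eq_eLpNorm (hq0 : q ≠ 0) {s : Set ℝ} (hs : MeasurableSet s) (g : ℝ → ℝ≥0∞) :
    lqNormOn q s g = eLpNorm g q (volume.restrict s) := by
  rcases eq_or_ne q ∞ with rfl | hq
  · rw [← eLpNorm_indicator_eq_eLpNorm_restrict hs, eLpNorm_exponent_top,
      eLpNormEssSup_eq_essSup_enorm]
    simp [lqNormOn]
  · simp [lqNormOn, hq, eLpNorm_eq_lintegral_rpow_enorm_toReal hq0 hq]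

theorem lpZNorm_eq_eLpNorm (hp0 : p ≠ 0) (a : ℤ → ℝ≥0∞) :
    lpZNorm p a = eLpNorm a p Measure.count := by
  rcases eq_or_ne p ∞ with rfl | hp
  · simp [lpZNorm]
  · simp [lpZNorm, hp, eLpNorm_eq_lintegral_rpow_enorm_toReal hp0 hp, lintegral_count]

theorem mem_herzRing {k : ℤ} {t : ℝ} :
    t ∈ herzRing k ↔ |t| ∈ Ico ((2 : ℝ) ^ (k - 1)) ((2 : ℝ) ^ k) := by
  rw [herzRing, Set.mem_sdiff, mem_Ioo, mem_Ioo, ← abs_lt, ← abs_lt, not_lt, mem_Ico, and_comm]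

theorem measurableSet_herzRing (k : ℤ) : MeasurableSet (herzRing k) :=
  measurableSet_Ioo.diff measurableSet_Ioo

theorem volume_herzRing_ne_top (k : ℤ) : volume (herzRing k) ≠ ∞ :=
  measure_ne_top_of_subset sdiff_subset (by simp)

theorem herzNorm1_eq_eLpNorm (hp0 : p ≠ 0) (hq0 : q ≠ 0) (g : ℝ → ℝ≥0∞) :
    herzNorm1 α p q g = eLpNorm (fun k : ℤ => ENNReal.ofReal ((2 : ℝ) ^ ((k : ℝ) * α)) *
      eLpNorm g q (volume.restrict (herzRing k))) p Measure.count := by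
  simp only [herzNorm1, lpZNorm_eq_eLpNorm hp0, lqNormOn_eq_eLpNorm hq0 (measurableSet_herzRing _)]

theorem herzNorm1_le_mul_of_ae_le_mul (hp0 : p ≠ 0) (hq0 : q ≠ 0) {g h : ℝ → ℝ≥0∞} {c : ℝ≥0∞}
    (hc : c ≠ ∞) (hgh : ∀ᵐ t, g t ≤ c * h t) :
    herzNorm1 α p q g ≤ c * herzNorm1 α p q h := by
  lift c to NNReal using hc
  rw [herzNorm1_eq_eLpNorm hp0 hq0, herzNorm1_eq_eLpNorm hp0 hq0]
  refine eLpNorm_le_nnreal_smul_eLpNorm_of_ae_le_mul' (.of_forall fun k => ?_) p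
  simp only [enorm_eq_self]
  rw [mul_left_comm]
  gcongr
  exact eLpNorm_le_nnreal_smul_eLpNorm_of_ae_le_mul' (ae_restrict_of_ae hgh) q

theorem herzNorm1_mono_ae (hp0 : p ≠ 0) (hq0 : q ≠ 0) {g h : ℝ → ℝ≥0∞} (hgh : g ≤ᵐ[volume] h) :
    herzNorm1 α p q g ≤ herzNorm1 α p q h := by
  simpa using herzNorm1_le_mul_of_ae_le_mul hp0 hq0 one_ne_top
    (hgh.mono fun t ht => by simpa using ht)

theorem herzNorm1_zero (hp0 : p ≠ 0) (hq0 : q ≠ 0) : herzNorm1 α p q (fun _ => 0) = 0 := by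
  simp [herzNorm1_eq_eLpNorm hp0 hq0]

theorem herzNorm1_add_le (hp0 : p ≠ 0) (hq0 : q ≠ 0) {g h : ℝ → ℝ≥0∞} (hg : AEMeasurable g)
    (hh : AEMeasurable h) :
    herzNorm1 α p q (fun t => g t + h t) ≤
      LpAddConst q * LpAddConst p * (herzNorm1 α p q g + herzNorm1 α p q h) := by
  simp only [herzNorm1_eq_eLpNorm hp0 hq0]
  set w : ℤ → ℝ≥0∞ := fun k => ENNReal.ofReal ((2 : ℝ) ^ ((k : ℝ) * α))
  set N : (ℝ → ℝ≥0∞) → ℤ → ℝ≥0∞ := fun g k => eLpNorm g q (volume.restrict (herzRing k))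
  have hN (k : ℤ) : N (fun t => g t + h t) k ≤ LpAddConst q * (N g k + N h k) :=
    eLpNorm_add_le' hg.restrict.aestronglyMeasurable hh.restrict.aestronglyMeasurable q
  calc eLpNorm (fun k => w k * N (fun t => g t + h t) k) p Measure.count
      ≤ LpAddConst q * eLpNorm (fun k => w k * N g k + w k * N h k) p Measure.count := by
        lift LpAddConst q to NNReal using (LpAddConst_lt_top q).ne with c
        refine eLpNorm_le_nnreal_smul_eLpNorm_of_ae_le_mul' (.of_forall fun k => ?_) p
        calc w k * N (fun t => g t + h t) k ≤ w k * (c * (N g k + N h k)) := by gcongr; exact hN k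
          _ = c * (w k * N g k + w k * N h k) := by ring
    _ ≤ LpAddConst q * (LpAddConst p * (eLpNorm (fun k => w k * N g k) p Measure.count +
          eLpNorm (fun k => w k * N h k) p Measure.count)) := by
        gcongr
        exact eLpNorm_add_le' (measurable_of_countable _).aestronglyMeasurable
          (measurable_of_countable _).aestronglyMeasurable p
    _ = _ := (mul_assoc _ _ _).symm

theorem measurable_herzNorm1 {Y : Type*} [MeasurableSpace Y] (hp0 : p ≠ 0) (hp : p ≠ ∞)
    (hq0 : q ≠ 0) (hq : q ≠ ∞) {F : Y → ℝ → ℝ≥0∞} (hF : Measurable (Function.uncurry F)) :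
    Measurable fun y => herzNorm1 α p q (F y) := by
  simp only [herzNorm1_eq_eLpNorm hp0 hq0]
  refine measurable_eLpNorm_prod_right (μ := (Measure.count : Measure ℤ)) hp
    (measurable_from_prod_countable_left fun k => ?_)
  exact (measurable_eLpNorm_prod_right (μ := volume.restrict (herzRing k)) hq hF).const_mul
    (ENNReal.ofReal ((2 : ℝ) ^ ((k : ℝ) * α)))

theorem tendsto_herzNorm1_zero_of_dominated (hp0 : p ≠ 0) (hp : p ≠ ∞) (hq0 : q ≠ 0) (hq : q ≠ ∞)
    {F : ℕ → ℝ → ℝ≥0∞} {G : ℝ → ℝ≥0∞} (hF : ∀ j, AEMeasurable (F j)) (hG : AEMeasurable G)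
    (hFG : ∀ j, F j ≤ᵐ[volume] G) (hfin : herzNorm1 α p q G ≠ ∞)
    (hlim : ∀ᵐ t, G t ≠ ∞ → Tendsto (fun j => F j t) atTop (𝓝 0)) :
    Tendsto (fun j => herzNorm1 α p q (F j)) atTop (𝓝 0) := by
  simp only [herzNorm1_eq_eLpNorm hp0 hq0] at hfin ⊢
  refine tendsto_eLpNorm_zero_of_dominated hp0 hp
    (fun j => (measurable_of_countable _).aemeasurable) (measurable_of_countable _).aemeasurable
    (fun j => .of_forall fun k => ?_) hfin (.of_forall fun k hk => ?_)
  · dsimp only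
    gcongr
    exact eLpNorm_mono_enorm_ae (ae_restrict_of_ae (hFG j))
  · have hGk : eLpNorm G q (volume.restrict (herzRing k)) ≠ ∞ := fun h => by
      have hpos : (0 : ℝ) < 2 ^ ((k : ℝ) * α) := by positivity
      simp [h, hpos, mul_top] at hk
    simpa using ENNReal.Tendsto.const_mul (tendsto_eLpNorm_zero_of_dominated hq0 hq
      (fun j => (hF j).restrict) hG.restrict (fun j => ae_restrict_of_ae (hFG j)) hGk
      (ae_restrict_of_ae hlim)) (.inr ofReal_ne_top)

end HerzNorm1

section MixedHerzNorm

variable {n : ℕ} {α : Fin n → ℝ} {p q : Fin n → ℝ≥0∞}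

theorem measurable_fin_snoc :
    Measurable fun z : (Fin n → ℝ) × ℝ => (Fin.snoc z.1 z.2 : Fin (n + 1) → ℝ) := by
  refine measurable_pi_iff.2 (Fin.lastCases ?_ fun i => ?_)
  · simpa using measurable_snd
  · simp only [Fin.snoc_castSucc]
    exact (measurable_pi_apply i).comp measurable_fst

theorem ae_ae_fin_snoc {P : (Fin (n + 1) → ℝ) → Prop} (h : ∀ᵐ x, P x) :
    ∀ᵐ t : ℝ, ∀ᵐ y : Fin n → ℝ, P (Fin.snoc y t) := by
  have e := (volume_preserving_piFinSuccAbove (fun _ : Fin (n + 1) => ℝ) (Fin.last n)).symm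
  simpa [MeasurableEquiv.piFinSuccAbove, Fin.insertNthEquiv] using
    Measure.ae_ae_of_ae_prod (e.quasiMeasurePreserving.ae h)

theorem ae_aemeasurable_fin_snoc {f : (Fin (n + 1) → ℝ) → ℝ≥0∞} (hf : AEMeasurable f) :
    ∀ᵐ t : ℝ, AEMeasurable fun y : Fin n → ℝ => f (Fin.snoc y t) := by
  filter_upwards [ae_ae_fin_snoc hf.ae_eq_mk] with t ht
  exact ⟨_, hf.measurable_mk.comp (measurable_fin_snoc.comp measurable_prodMk_right), ht⟩

theorem mixedHerzNormE_mono_ae (hp0 : ∀ i, p i ≠ 0) (hq0 : ∀ i, q i ≠ 0)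
    {f g : (Fin n → ℝ) → ℝ≥0∞} (hfg : f ≤ᵐ[volume] g) :
    mixedHerzNormE n α p q f ≤ mixedHerzNormE n α p q g := by
  induction n with
  | zero =>
    obtain ⟨x, hx⟩ := hfg.exists
    rwa [Subsingleton.elim x fun i => i.elim0] at hx
  | succ n ih =>
    refine herzNorm1_mono_ae (hp0 _) (hq0 _) ?_
    filter_upwards [ae_ae_fin_snoc hfg] with t ht
    exact ih (fun _ => hp0 _) (fun _ => hq0 _) ht

theorem mixedHerzNormE_congr_ae (hp0 : ∀ i, p i ≠ 0) (hq0 : ∀ i, q i ≠ 0)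
    {f g : (Fin n → ℝ) → ℝ≥0∞} (hfg : f =ᵐ[volume] g) :
    mixedHerzNormE n α p q f = mixedHerzNormE n α p q g :=
  (mixedHerzNormE_mono_ae hp0 hq0 hfg.le).antisymm (mixedHerzNormE_mono_ae hp0 hq0 hfg.symm.le)

theorem mixedHerzNormE_zero (hp0 : ∀ i, p i ≠ 0) (hq0 : ∀ i, q i ≠ 0) :
    mixedHerzNormE n α p q (fun _ => 0) = 0 := by
  induction n with
  | zero => rfl
  | succ n ih =>
    simp only [mixedHerzNormE]
    rw [ih (α := Fin.init α) (p := Fin.init p) (q := Fin.init q) (fun _ => hp0 _) fun _ => hq0 _]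
    exact herzNorm1_zero (hp0 _) (hq0 _)

theorem measurable_mixedHerzNormE {Y : Type*} [MeasurableSpace Y] (hp0 : ∀ i, p i ≠ 0)
    (hp : ∀ i, p i ≠ ∞) (hq0 : ∀ i, q i ≠ 0) (hq : ∀ i, q i ≠ ∞) {F : Y → (Fin n → ℝ) → ℝ≥0∞}
    (hF : Measurable (Function.uncurry F)) :
    Measurable fun y => mixedHerzNormE n α p q (F y) := by
  induction n generalizing Y with
  | zero => exact hF.comp measurable_prodMk_right
  | succ n ih =>
    refine measurable_herzNorm1 (hp0 _) (hp _) (hq0 _) (hq _) ?_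
    refine ih (Y := Y × ℝ) (fun _ => hp0 _) (fun _ => hp _) (fun _ => hq0 _) (fun _ => hq _)
      (F := fun z y => F z.1 (Fin.snoc y z.2)) ?_
    exact hF.comp ((measurable_fst.comp measurable_fst).prodMk
      (measurable_fin_snoc.comp (measurable_snd.prodMk (measurable_snd.comp measurable_fst))))

theorem aemeasurable_mixedHerzNormE_fin_snoc (hp0 : ∀ i, p i ≠ 0) (hp : ∀ i, p i ≠ ∞)
    (hq0 : ∀ i, q i ≠ 0) (hq : ∀ i, q i ≠ ∞) {f : (Fin (n + 1) → ℝ) → ℝ≥0∞}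
    (hf : AEMeasurable f) :
    AEMeasurable fun t : ℝ => mixedHerzNormE n α p q fun y => f (Fin.snoc y t) := by
  refine ⟨fun t => mixedHerzNormE n α p q fun y => hf.mk f (Fin.snoc y t), ?_, ?_⟩
  · exact measurable_mixedHerzNormE hp0 hp hq0 hq
      (hf.measurable_mk.comp (measurable_fin_snoc.comp measurable_swap))
  · filter_upwards [ae_ae_fin_snoc hf.ae_eq_mk] with t ht
    exact mixedHerzNormE_congr_ae hp0 hq0 ht

theorem prod_lpAddConst_mul_ne_top (p q : Fin n → ℝ≥0∞) :
    ∏ i, LpAddConst (q i) * LpAddConst (p i) ≠ ∞ :=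
  prod_ne_top fun _ _ => mul_ne_top (LpAddConst_lt_top _).ne (LpAddConst_lt_top _).ne

theorem mixedHerzNormE_add_le (hp0 : ∀ i, p i ≠ 0) (hp : ∀ i, p i ≠ ∞) (hq0 : ∀ i, q i ≠ 0)
    (hq : ∀ i, q i ≠ ∞) {f g : (Fin n → ℝ) → ℝ≥0∞} (hf : AEMeasurable f) (hg : AEMeasurable g) :
    mixedHerzNormE n α p q (fun x => f x + g x) ≤
      (∏ i, LpAddConst (q i) * LpAddConst (p i)) *
        (mixedHerzNormE n α p q f + mixedHerzNormE n α p q g) := by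
  induction n with
  | zero => simp [mixedHerzNormE]
  | succ n ih =>
    let C := ∏ i : Fin n, LpAddConst (q i.castSucc) * LpAddConst (p i.castSucc)
    have hC : C ≠ ∞ := prod_lpAddConst_mul_ne_top (Fin.init p) (Fin.init q)
    let N (f : (Fin (n + 1) → ℝ) → ℝ≥0∞) (t : ℝ) : ℝ≥0∞ :=
      mixedHerzNormE n (Fin.init α) (Fin.init p) (Fin.init q) fun y => f (Fin.snoc y t)
    have hN {f : (Fin (n + 1) → ℝ) → ℝ≥0∞} (hf : AEMeasurable f) : AEMeasurable (N f) :=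
      aemeasurable_mixedHerzNormE_fin_snoc (fun _ => hp0 _) (fun _ => hp _) (fun _ => hq0 _)
        (fun _ => hq _) hf
    have hslice : ∀ᵐ t, N (fun x => f x + g x) t ≤ C * (N f t + N g t) := by
      filter_upwards [ae_aemeasurable_fin_snoc hf, ae_aemeasurable_fin_snoc hg] with t hft hgt
      exact ih (fun _ => hp0 _) (fun _ => hp _) (fun _ => hq0 _) (fun _ => hq _) hft hgt
    rw [Fin.prod_univ_castSucc, mul_assoc]
    exact (herzNorm1_le_mul_of_ae_le_mul (hp0 _) (hq0 _) hC hslice).trans <| by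
      gcongr
      exact herzNorm1_add_le (hp0 _) (hq0 _) (hN hf) (hN hg)

theorem tendsto_mixedHerzNormE_zero_of_dominated (hp0 : ∀ i, p i ≠ 0) (hp : ∀ i, p i ≠ ∞)
    (hq0 : ∀ i, q i ≠ 0) (hq : ∀ i, q i ≠ ∞) {F : ℕ → (Fin n → ℝ) → ℝ≥0∞}
    {G : (Fin n → ℝ) → ℝ≥0∞} (hF : ∀ j, AEMeasurable (F j)) (hG : AEMeasurable G)
    (hFG : ∀ j, F j ≤ᵐ[volume] G) (hfin : mixedHerzNormE n α p q G ≠ ∞)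
    (hlim : ∀ᵐ x, Tendsto (fun j => F j x) atTop (𝓝 0)) :
    Tendsto (fun j => mixedHerzNormE n α p q (F j)) atTop (𝓝 0) := by
  induction n with
  | zero =>
    obtain ⟨x, hx⟩ := hlim.exists
    rwa [Subsingleton.elim x fun i => i.elim0] at hx
  | succ n ih =>
    refine tendsto_herzNorm1_zero_of_dominated (hp0 _) (hp _) (hq0 _) (hq _)
      (fun j => aemeasurable_mixedHerzNormE_fin_snoc (fun _ => hp0 _) (fun _ => hp _)
        (fun _ => hq0 _) (fun _ => hq _) (hF j))
      (aemeasurable_mixedHerzNormE_fin_snoc (fun _ => hp0 _) (fun _ => hp _)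
        (fun _ => hq0 _) (fun _ => hq _) hG) (fun j => ?_) hfin ?_
    · filter_upwards [ae_ae_fin_snoc (hFG j)] with t ht
      exact mixedHerzNormE_mono_ae (fun _ => hp0 _) (fun _ => hq0 _) ht
    · filter_upwards [ae_ae_fin_snoc hlim, ae_aemeasurable_fin_snoc hG,
        ae_all_iff.2 fun j => ae_aemeasurable_fin_snoc (hF j),
        ae_all_iff.2 fun j => ae_ae_fin_snoc (hFG j)] with t hlim_t hG_t hF_t hFG_t hfin_t
      exact ih (fun _ => hp0 _) (fun _ => hp _) (fun _ => hq0 _) (fun _ => hq _) hF_t hG_t hFG_t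
        hfin_t hlim_t

theorem mixedHerzNormE_indicator_pi_ne_top (hp0 : ∀ i, p i ≠ 0) (hq0 : ∀ i, q i ≠ 0)
    {s : Fin n → Set ℝ} (hs : ∀ i, herzNorm1 (α i) (p i) (q i) ((s i).indicator 1) ≠ ∞)
    {c : ℝ≥0∞} (hc : c ≠ ∞) :
    mixedHerzNormE n α p q ((univ.pi s).indicator fun _ => c) ≠ ∞ := by
  induction n with
  | zero => simpa [mixedHerzNormE, indicator] using hc
  | succ n ih =>
    set M := mixedHerzNormE n (Fin.init α) (Fin.init p) (Fin.init q)
      ((univ.pi (Fin.init s)).indicator fun _ => c)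
    have hM : M ≠ ∞ := ih (fun _ => hp0 _) (fun _ => hq0 _) fun _ => hs _
    have hmem (y : Fin n → ℝ) (t : ℝ) :
        Fin.snoc (α := fun _ => ℝ) y t ∈ univ.pi s ↔
          y ∈ univ.pi (Fin.init s) ∧ t ∈ s (Fin.last n) := by
      simp [Fin.forall_fin_succ', Fin.init]
    refine ne_top_of_le_ne_top (mul_ne_top hM (hs (Fin.last n)))
      (herzNorm1_le_mul_of_ae_le_mul (hp0 _) (hq0 _) hM (.of_forall fun t => ?_))
    by_cases ht : t ∈ s (Fin.last n)
    · have hslice : (fun y : Fin n → ℝ => (univ.pi s).indicator (fun _ => c) (Fin.snoc y t)) =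
          (univ.pi (Fin.init s)).indicator fun _ => c :=
        funext fun y => by classical exact if_congr ((hmem y t).trans (and_iff_left ht)) rfl rfl
      simp [M, hslice, ht]
    · simp [indicator, hmem, ht, mixedHerzNormE_zero (p := Fin.init p) (q := Fin.init q)
        (fun _ => hp0 _) fun _ => hq0 _]

end MixedHerzNorm

section DyadicBox

/-- The dyadic shell `2^{-m} ≤ |t| ≤ 2^m`, a compact counterpart of `herzI m`. -/
def dyadicShell (m : ℕ) : Set ℝ := abs ⁻¹' Icc ((2 : ℝ) ^ (-m : ℤ)) ((2 : ℝ) ^ (m : ℤ))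

/-- The product of `n` dyadic shells, a compact counterpart of `herzA n m`. These sets exhaust
`ℝⁿ` up to the coordinate hyperplanes. -/
def dyadicBox (n m : ℕ) : Set (Fin n → ℝ) := univ.pi fun _ => dyadicShell m

theorem isCompact_dyadicShell (m : ℕ) : IsCompact (dyadicShell m) :=
  isCompact_Icc.of_isClosed_subset (isClosed_Icc.preimage continuous_abs)
    fun _ ht => abs_le.1 ht.2

theorem isCompact_dyadicBox (n m : ℕ) : IsCompact (dyadicBox n m) :=
  isCompact_univ_pi fun _ => isCompact_dyadicShell m

theorem dyadicShell_subset_interior_succ (m : ℕ) :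
    dyadicShell m ⊆ interior (dyadicShell (m + 1)) := by
  refine Subset.trans (preimage_mono ?_) (preimage_interior_subset_interior_preimage continuous_abs)
  rw [interior_Icc]
  exact Icc_subset_Ioo (zpow_lt_zpow_right₀ _root_.one_lt_two (by lia))
    (zpow_lt_zpow_right₀ _root_.one_lt_two (by lia))

theorem dyadicBox_subset_interior_succ (n m : ℕ) :
    dyadicBox n m ⊆ interior (dyadicBox n (m + 1)) := by
  rw [dyadicBox, dyadicBox, interior_pi_set finite_univ]
  exact pi_mono fun _ _ => dyadicShell_subset_interior_succ m

theorem eventually_mem_dyadicShell {t : ℝ} (ht : t ≠ 0) : ∀ᶠ m in atTop, t ∈ dyadicShell m := by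
  have h := tendsto_pow_atTop_atTop_of_one_lt (_root_.one_lt_two (α := ℝ))
  filter_upwards [h.eventually_ge_atTop |t|, h.eventually_ge_atTop |t|⁻¹] with m hm hm'
  refine ⟨?_, by simpa using hm⟩
  simpa using inv_le_of_inv_le₀ (abs_pos.2 ht) hm'

theorem ae_eventually_mem_dyadicBox (n : ℕ) :
    ∀ᵐ x : Fin n → ℝ, ∀ᶠ m in atTop, x ∈ dyadicBox n m := by
  have hne : ∀ᵐ x : Fin n → ℝ, ∀ i, x i ≠ 0 :=
    ae_all_iff.2 fun i => Measure.ae_eval_ne (fun _ => volume) i 0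
  filter_upwards [hne] with x hx
  simp only [dyadicBox, mem_univ_pi, eventually_all]
  exact fun i => eventually_mem_dyadicShell (hx i)

theorem mem_Icc_of_mem_herzRing_of_mem_dyadicShell {k : ℤ} {m : ℕ} {t : ℝ} (htk : t ∈ herzRing k)
    (htm : t ∈ dyadicShell m) : k ∈ Icc (-m : ℤ) (m + 1) := by
  rw [mem_herzRing] at htk
  have hlt := (zpow_lt_zpow_iff_right₀ (_root_.one_lt_two (α := ℝ))).1 (htm.1.trans_lt htk.2)
  have hle := (zpow_le_zpow_iff_right₀ (_root_.one_lt_two (α := ℝ))).1 (htk.1.trans htm.2)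
  exact ⟨by lia, by lia⟩

theorem herzNorm1_indicator_dyadicShell_ne_top {α : ℝ} {p q : ℝ≥0∞} (hp0 : p ≠ 0) (hq0 : q ≠ 0)
    (m : ℕ) : herzNorm1 α p q ((dyadicShell m).indicator 1) ≠ ∞ := by
  rw [herzNorm1_eq_eLpNorm hp0 hq0]
  simp only [← eLpNorm_indicator_eq_eLpNorm_restrict (measurableSet_herzRing _)]
  refine eLpNorm_count_ne_top_of_finite_support (fun k => mul_ne_top ofReal_ne_top ?_)
    ((finite_Icc (-m : ℤ) (m + 1)).subset <| Function.support_subset_iff'.2 fun k hk => ?_)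
  · refine ne_top_of_le_ne_top ?_ ((eLpNorm_mono_enorm fun t => ?_).trans
      (eLpNorm_indicator_const_le (s := herzRing k) (1 : ℝ≥0∞) q))
    · simpa using rpow_ne_top_of_nonneg (inv_nonneg.2 toReal_nonneg) (volume_herzRing_ne_top k)
    · exact indicator_le_indicator (indicator_le_self _ _ t)
  · have hdisj : herzRing k ∩ dyadicShell m = ∅ := eq_empty_iff_forall_notMem.2 fun t ht =>
      hk (mem_Icc_of_mem_herzRing_of_mem_dyadicShell ht.1 ht.2)
    simp [indicator_indicator, hdisj]

theorem mixedHerzNormE_indicator_dyadicBox_ne_top {n : ℕ} {α : Fin n → ℝ} {p q : Fin n → ℝ≥0∞}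
    (hp0 : ∀ i, p i ≠ 0) (hq0 : ∀ i, q i ≠ 0) (m : ℕ) {c : ℝ≥0∞} (hc : c ≠ ∞) :
    mixedHerzNormE n α p q ((dyadicBox n m).indicator fun _ => c) ≠ ∞ :=
  mixedHerzNormE_indicator_pi_ne_top hp0 hq0
    (fun i => herzNorm1_indicator_dyadicShell_ne_top (hp0 i) (hq0 i) m) hc

end DyadicBox

section RadialProj

variable [SeminormedAddCommGroup E] [NormedSpace ℝ E]

/-- The radial projection of a normed space onto its closed ball of radius `r > 0`, used to
truncate vector-valued functions. -/
def radialProj (r : ℝ) (x : E) : E := (r / max r ‖x‖) • x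

theorem continuous_radialProj {r : ℝ} (hr : 0 < r) : Continuous (radialProj (E := E) r) :=
  (continuous_const.div (continuous_const.max continuous_norm)
    fun _ => (lt_max_of_lt_left hr).ne').smul continuous_id

theorem radialProj_of_norm_le {r : ℝ} (hr : 0 < r) {x : E} (hx : ‖x‖ ≤ r) :
    radialProj r x = x := by
  rw [radialProj, max_eq_left hx, div_self hr.ne', one_smul]

theorem norm_radialProj_le {r : ℝ} (hr : 0 < r) (x : E) : ‖radialProj r x‖ ≤ r := by
  rw [radialProj, norm_smul, Real.norm_of_nonneg (by positivity), div_mul_eq_mul_div]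
  exact div_le_of_le_mul₀ (by positivity) hr.le (by gcongr; exact le_max_right _ _)

theorem norm_sub_radialProj_le {r : ℝ} (hr : 0 < r) (x : E) : ‖x - radialProj r x‖ ≤ ‖x‖ := by
  have hle : r / max r ‖x‖ ≤ 1 := div_le_one_of_le₀ (le_max_left _ _) (by positivity)
  have hnonneg : 0 ≤ r / max r ‖x‖ := by positivity
  calc ‖x - radialProj r x‖ = ‖(1 - r / max r ‖x‖) • x‖ := by rw [radialProj, sub_smul, one_smul]
    _ = (1 - r / max r ‖x‖) * ‖x‖ := by rw [norm_smul, Real.norm_of_nonneg (sub_nonneg.2 hle)]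
    _ ≤ ‖x‖ := mul_le_of_le_one_left (norm_nonneg x) (by linarith)

end RadialProj

section ContinuousApproximation

variable [NormedAddCommGroup E] [NormedSpace ℝ E] [TopologicalSpace X] [NormalSpace X] [R1Space X]
  [WeaklyLocallyCompactSpace X] [MeasurableSpace X] [BorelSpace X] {μ : Measure X} [μ.Regular]

theorem exists_seq_continuous_tendsto_ae_of_memLp {p : ℝ≥0∞} (hp0 : p ≠ 0) (hp : p ≠ ∞)
    {f : X → E} (hf : MemLp f p μ) :
    ∃ g : ℕ → X → E, (∀ j, Continuous (g j)) ∧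
      ∀ᵐ x ∂μ, Tendsto (fun j => g j x) atTop (𝓝 (f x)) := by
  choose g _ hfg hg hgLp using fun j : ℕ =>
    hf.exists_hasCompactSupport_eLpNorm_sub_le hp (ε := (j : ℝ≥0∞)⁻¹) (by simp)
  have hlim : Tendsto (fun j => eLpNorm (g j - f) p μ) atTop (𝓝 0) :=
    tendsto_of_tendsto_of_tendsto_of_le_of_le tendsto_const_nhds ENNReal.tendsto_inv_nat_nhds_zero
      (fun _ => zero_le) fun j => (eLpNorm_sub_comm _ _ _ _).trans_le (hfg j)
  obtain ⟨φ, -, hφ⟩ := (tendstoInMeasure_of_tendsto_eLpNorm hp0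
    (fun j => (hgLp j).aestronglyMeasurable) hf.aestronglyMeasurable hlim).exists_seq_tendsto_ae
  exact ⟨g ∘ φ, fun j => hg _, hφ⟩

theorem exists_seq_continuous_tendsto_ae_of_support_subset {K U : Set X} (hK : IsClosed K)
    (hμK : μ K ≠ ∞) (hU : IsOpen U) (hKU : K ⊆ U) {f : X → E} (hf : AEStronglyMeasurable f μ)
    {M : ℝ} (hM : 0 < M) (hfM : ∀ x, ‖f x‖ ≤ M) (hfK : f.support ⊆ K) :
    ∃ g : ℕ → X → E, (∀ j, Continuous (g j)) ∧ (∀ j x, ‖g j x‖ ≤ M) ∧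
      (∀ j, (g j).support ⊆ U) ∧ ∀ᵐ x ∂μ, Tendsto (fun j => g j x) atTop (𝓝 (f x)) := by
  have hf_memLp : MemLp f 1 μ :=
    (memLp_top_of_bound hf M (.of_forall hfM)).mono_exponent_of_measure_support_ne_top
      (fun x hx => Function.notMem_support.1 (mt (@hfK x) hx)) hμK le_top
  obtain ⟨h, hh, hhf⟩ := exists_seq_continuous_tendsto_ae_of_memLp one_ne_zero one_ne_top hf_memLp
  obtain ⟨χ, hχ0, hχ1, hχ⟩ := exists_continuous_zero_one_of_isClosed hU.isClosed_compl hK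
    (disjoint_compl_left_iff_subset.2 hKU)
  refine ⟨fun j x => χ x • radialProj M (h j x), fun j => ?_, fun j x => ?_, fun j x hx => ?_, ?_⟩
  · exact χ.continuous.smul ((continuous_radialProj hM).comp (hh j))
  · rw [norm_smul, Real.norm_of_nonneg (hχ x).1]
    exact (mul_le_of_le_one_left (norm_nonneg _) (hχ x).2).trans (norm_radialProj_le hM _)
  · by_contra hxU
    exact hx (by simp [hχ0 hxU])
  · filter_upwards [hhf] with x hx
    have hfx : χ x • radialProj M (f x) = f x := by
      rw [radialProj_of_norm_le hM (hfM x)]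
      by_cases hxK : x ∈ K
      · rw [hχ1 hxK, Pi.one_apply, one_smul]
      · rw [Function.notMem_support.1 (mt (@hfK x) hxK), smul_zero]
    rw [← hfx]
    exact (((continuous_radialProj hM).tendsto _).comp hx).const_smul _

end ContinuousApproximation

section Density

variable [NormedAddCommGroup E]

theorem enorm_le_indicator_of_norm_le {f : X → E} {c : ℝ} {s : Set X} (hc : ∀ x, ‖f x‖ ≤ c)
    (hs : f.support ⊆ s) (x : X) : ‖f x‖ₑ ≤ s.indicator (fun _ => ENNReal.ofReal c) x := by
  by_cases hx : x ∈ s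
  · simpa [hx, ← ofReal_norm] using ofReal_le_ofReal (hc x)
  · simp [Function.notMem_support.1 (mt (@hs x) hx)]

variable [NormedSpace ℝ E] {n : ℕ} {α : Fin n → ℝ} {p q : Fin n → ℝ≥0∞}

/-- The truncation of `f` in space, to a dyadic box, and in size, to the ball of radius `2 ^ m`. -/
def dyadicTruncation (m : ℕ) (f : (Fin n → ℝ) → E) : (Fin n → ℝ) → E :=
  (dyadicBox n m).indicator fun x => radialProj (2 ^ m) (f x)

theorem aestronglyMeasurable_dyadicTruncation (m : ℕ) {f : (Fin n → ℝ) → E}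
    (hf : AEStronglyMeasurable f volume) :
    AEStronglyMeasurable (dyadicTruncation m f) volume :=
  ((continuous_radialProj (by positivity)).comp_aestronglyMeasurable hf).indicator
    (isCompact_dyadicBox n m).measurableSet

theorem support_dyadicTruncation_subset (m : ℕ) (f : (Fin n → ℝ) → E) :
    (dyadicTruncation m f).support ⊆ dyadicBox n m :=
  support_indicator_subset

theorem norm_dyadicTruncation_le (m : ℕ) (f : (Fin n → ℝ) → E) (x : Fin n → ℝ) :
    ‖dyadicTruncation m f x‖ ≤ 2 ^ m :=
  (norm_indicator_le_norm_self _ x).trans (norm_radialProj_le (by positivity) _)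

theorem norm_sub_dyadicTruncation_le (m : ℕ) (f : (Fin n → ℝ) → E) (x : Fin n → ℝ) :
    ‖f x - dyadicTruncation m f x‖ ≤ ‖f x‖ := by
  by_cases hx : x ∈ dyadicBox n m
  · simpa [dyadicTruncation, hx] using norm_sub_radialProj_le (by positivity) (f x)
  · simp [dyadicTruncation, hx]

theorem ae_eventually_dyadicTruncation_eq (f : (Fin n → ℝ) → E) :
    ∀ᵐ x, ∀ᶠ m in atTop, dyadicTruncation m f x = f x := by
  filter_upwards [ae_eventually_mem_dyadicBox n] with x hx
  have hbig : ∀ᶠ m in atTop, ‖f x‖ ≤ 2 ^ m :=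
    (tendsto_pow_atTop_atTop_of_one_lt (_root_.one_lt_two (α := ℝ))).eventually_ge_atTop _
  filter_upwards [hx, hbig] with m hxm hfm
  simp [dyadicTruncation, hxm, radialProj_of_norm_le (by positivity) hfm]

theorem tendsto_mixedHerzNormE_sub_dyadicTruncation (hp0 : ∀ i, p i ≠ 0) (hp : ∀ i, p i ≠ ∞)
    (hq0 : ∀ i, q i ≠ 0) (hq : ∀ i, q i ≠ ∞) {f : (Fin n → ℝ) → E}
    (hf : AEStronglyMeasurable f volume) (hfin : mixedHerzNormE n α p q (fun x => ‖f x‖ₑ) ≠ ∞) :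
    Tendsto (fun m => mixedHerzNormE n α p q fun x => ‖f x - dyadicTruncation m f x‖ₑ)
      atTop (𝓝 0) := by
  refine tendsto_mixedHerzNormE_zero_of_dominated hp0 hp hq0 hq
    (fun m => (hf.sub (aestronglyMeasurable_dyadicTruncation m hf)).enorm) hf.enorm
    (fun m => .of_forall fun x => enorm_le_iff_norm_le.2 (norm_sub_dyadicTruncation_le m f x))
    hfin ?_
  filter_upwards [ae_eventually_dyadicTruncation_eq f] with x hx
  exact tendsto_const_nhds.congr' (hx.mono fun m hm => by simp [hm])

theorem exists_continuous_mixedHerzNormE_sub_lt_of_bounded (hp0 : ∀ i, p i ≠ 0)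
    (hp : ∀ i, p i ≠ ∞) (hq0 : ∀ i, q i ≠ 0) (hq : ∀ i, q i ≠ ∞) {f : (Fin n → ℝ) → E}
    (hf : AEStronglyMeasurable f volume) {M : ℝ} (hM : 0 < M) (hfM : ∀ x, ‖f x‖ ≤ M) {m : ℕ}
    (hfm : f.support ⊆ dyadicBox n m) {δ : ℝ≥0∞} (hδ : 0 < δ) :
    ∃ g : (Fin n → ℝ) → E, Continuous g ∧ HasCompactSupport g ∧
      mixedHerzNormE n α p q (fun x => ‖g x‖ₑ) ≠ ∞ ∧
      mixedHerzNormE n α p q (fun x => ‖f x - g x‖ₑ) < δ := by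
  obtain ⟨g, hg, hgM, hgm, hlim⟩ := exists_seq_continuous_tendsto_ae_of_support_subset
    (isCompact_dyadicBox n m).isClosed (isCompact_dyadicBox n m).measure_ne_top isOpen_interior
    (dyadicBox_subset_interior_succ n m) hf hM hfM hfm
  replace hgm (j : ℕ) : (g j).support ⊆ dyadicBox n (m + 1) := (hgm j).trans interior_subset
  replace hfm : f.support ⊆ dyadicBox n (m + 1) :=
    hfm.trans ((dyadicBox_subset_interior_succ n m).trans interior_subset)
  have hbox := isCompact_dyadicBox n (m + 1)
  have hfin (c : ℝ) : mixedHerzNormE n α p q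
      ((dyadicBox n (m + 1)).indicator fun _ => ENNReal.ofReal c) ≠ ∞ :=
    mixedHerzNormE_indicator_dyadicBox_ne_top hp0 hq0 (m + 1) ofReal_ne_top
  have hconv : Tendsto (fun j => mixedHerzNormE n α p q fun x => ‖f x - g j x‖ₑ) atTop (𝓝 0) := by
    refine tendsto_mixedHerzNormE_zero_of_dominated hp0 hp hq0 hq
      (fun j => (hf.sub (hg j).aestronglyMeasurable).enorm)
      (measurable_const.indicator hbox.measurableSet).aemeasurable
      (fun j => .of_forall (enorm_le_indicator_of_norm_le (f := f - g j) (c := M + M)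
        (fun x => ?_) ?_)) (hfin _) ?_
    · exact (norm_sub_le _ _).trans (add_le_add (hfM x) (hgM j x))
    · exact (Function.support_sub _ _).trans (union_subset hfm (hgm j))
    · filter_upwards [hlim] with x hx
      simpa using ((tendsto_const_nhds (x := f x)).sub hx).enorm
  obtain ⟨j, hj⟩ := (hconv.eventually_lt_const hδ).exists
  have hgj : mixedHerzNormE n α p q (fun x => ‖g j x‖ₑ) ≠ ∞ := ne_top_of_le_ne_top (hfin M)
    (mixedHerzNormE_mono_ae hp0 hq0 (.of_forall (enorm_le_indicator_of_norm_le (hgM j) (hgm j))))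
  exact ⟨g j, hg j, .of_support_subset_isCompact hbox (hgm j), hgj, hj⟩

theorem mixedHerz_Cc_dense_general (hp0 : ∀ i, p i ≠ 0) (hp : ∀ i, p i ≠ ∞)
    (hq0 : ∀ i, q i ≠ 0) (hq : ∀ i, q i ≠ ∞) {f : (Fin n → ℝ) → E}
    (hf : AEStronglyMeasurable f volume) (hfin : mixedHerzNormE n α p q (fun x => ‖f x‖ₑ) ≠ ∞)
    {ε : ℝ≥0∞} (hε : 0 < ε) :
    ∃ g : (Fin n → ℝ) → E, Continuous g ∧ HasCompactSupport g ∧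
      mixedHerzNormE n α p q (fun x => ‖g x‖ₑ) ≠ ∞ ∧
      mixedHerzNormE n α p q (fun x => ‖f x - g x‖ₑ) < ε := by
  let C := ∏ i, LpAddConst (q i) * LpAddConst (p i)
  have hδ : 0 < ε / C / 2 :=
    ENNReal.half_pos (ENNReal.div_pos hε.ne' (prod_lpAddConst_mul_ne_top p q)).ne'
  obtain ⟨m, hm⟩ := ((tendsto_mixedHerzNormE_sub_dyadicTruncation hp0 hp hq0 hq hf
    hfin).eventually_lt_const hδ).exists
  have hF := aestronglyMeasurable_dyadicTruncation m hf
  set F := dyadicTruncation m f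
  obtain ⟨g, hg, hgc, hg_fin, hFg⟩ := exists_continuous_mixedHerzNormE_sub_lt_of_bounded hp0 hp hq0
    hq hF (by positivity) (norm_dyadicTruncation_le m f) (support_dyadicTruncation_subset m f) hδ
  refine ⟨g, hg, hgc, hg_fin, ?_⟩
  calc mixedHerzNormE n α p q (fun x => ‖f x - g x‖ₑ)
      ≤ mixedHerzNormE n α p q (fun x => ‖f x - F x‖ₑ + ‖F x - g x‖ₑ) :=
        mixedHerzNormE_mono_ae hp0 hq0 <| .of_forall fun x => by
          simpa using enorm_add_le (f x - F x) (F x - g x)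
    _ ≤ C * (mixedHerzNormE n α p q (fun x => ‖f x - F x‖ₑ) +
          mixedHerzNormE n α p q (fun x => ‖F x - g x‖ₑ)) :=
        mixedHerzNormE_add_le hp0 hp hq0 hq (hf.sub hF).enorm (hF.sub hg.aestronglyMeasurable).enorm
    _ < ε :=
        ENNReal.mul_lt_of_lt_div' ((ENNReal.add_lt_add hm hFg).trans_eq (ENNReal.add_halves _))

end Density

/-- density of compactly supported continuous functions in the
mixed-norm Herz space. -/
theorem mixedHerz_Cc_dense (n : ℕ) (p q α : Fin n → ℝ)
    (hp : ∀ i, 0 < p i) (hq : ∀ i, 0 < q i)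
    (f : (Fin n → ℝ) → ℂ) (hf : Measurable f)
    (hfin : herzNormC n α (fun i => ENNReal.ofReal (p i))
      (fun i => ENNReal.ofReal (q i)) f ≠ ∞)
    (ε : ℝ≥0∞) (hε : 0 < ε) :
    ∃ g : (Fin n → ℝ) → ℂ, Continuous g ∧ HasCompactSupport g ∧
      herzNormC n α (fun i => ENNReal.ofReal (p i)) (fun i => ENNReal.ofReal (q i)) g ≠ ∞ ∧
      herzNormC n α (fun i => ENNReal.ofReal (p i)) (fun i => ENNReal.ofReal (q i))
        (f - g) < ε :=
  mixedHerz_Cc_dense_general (fun i => (ofReal_pos.2 (hp i)).ne') (fun _ => ofReal_ne_top)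
    (fun i => (ofReal_pos.2 (hq i)).ne') (fun _ => ofReal_ne_top) hf.aestronglyMeasurable hfin hε
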